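/- Let G and H be weighted graphs on the same finite nonempty vertex set V, with vol_G(V) > 0, and let D_G be the demand graph of G. Suppose α, β ≥ 0 are such that cap_G(S) ≥ α·cap_{D_G}(S) and cap_G(S) ≥ β·cap_H(S) for every subset S ⊆ V. Then for every vector x : V → ℝ satisfying ∑_{v ∈ V} d_G(v)·x(v) = 0, one has 4·Q_G(x) ≥ α·β·Q_H(x). (Equivalently, x^T L_G x / x^T L_H x ≥ φ(G,D_G)·φ(G,H)/4 for all x with x^T d = 0.) -/

import Mathlib

open Finset

/-- Cut capacity of `S` in the weighted graph `w`: total weight crossing from `S` to its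
complement. -/
def cap {V : Type*} [Fintype V] [DecidableEq V] (w : V → V → ℝ) (S : Finset V) : ℝ :=
  ∑ u ∈ S, ∑ v ∈ Sᶜ, w u v

/-- Degree of a vertex in the weighted graph `w`. -/
def deg {V : Type*} [Fintype V] (w : V → V → ℝ) (v : V) : ℝ :=
  ∑ u, w v u

/-- Volume of a vertex subset. -/
def vol {V : Type*} [Fintype V] (w : V → V → ℝ) (S : Finset V) : ℝ :=
  ∑ v ∈ S, deg w v

/-- Laplacian quadratic form `xᵀ L_w x` of the weighted graph `w`. -/
noncomputable def quadForm {V : Type*} [Fintype V] (w : V → V → ℝ) (x : V → ℝ) : ℝ :=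
  (1 / 2) * ∑ u, ∑ v, w u v * (x u - x v) ^ 2

/-- The demand graph of `G`. -/
noncomputable def demand {V : Type*} [Fintype V] [DecidableEq V] (G : V → V → ℝ) :
    V → V → ℝ :=
  fun u v => if u = v then 0 else deg G u * deg G v / vol G Finset.univ

/-!
By the coarea formula, `∑ u, ∑ v, w u v * |h u - h v|` is an integral of cut capacities of sublevel
sets of `h`, so a comparison of cuts is a comparison of these sums, for every `h`. It is applied to
two test functions. Write `f t = t * |t|` and `d = deg G`.

For `h u = ∑ w, d w * f (x u - x w)` one has `|h u - h v| ≤ |x u - x v| * (Y u + Y v)` with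
`Y u = ∑ w, d w * |x u - x w|`, while an identity between cyclic sums over triples of reals
evaluates the variation of `h` on the demand graph exactly, up to a factor `2 * vol G univ`, as
`∑ d Y² + (vol G univ)² ∑ d x²`. After AM-GM on the edges of `G` the terms `∑ d Y²` cancel, and
what remains is the spectral bound `α² ∑ d x² ≤ 2 Q_G(x)`.

For `h = f ∘ x` the comparison with `H` and AM-GM give `α β Q_H(x) ≤ 2 Q_G(x) + α² ∑ d x²`, and
the right-hand side is at most `4 Q_G(x)` by the spectral bound.
-/

section SignedSq

/-- The signed square, the increasing antiderivative of `2 |t|`. -/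
def signedSq (t : ℝ) : ℝ := t * |t|

lemma signedSq_mono : Monotone signedSq := by
  intro a b hab
  rw [signedSq, signedSq]
  rcases abs_cases a with ⟨ha, _⟩ | ⟨ha, _⟩ <;> rcases abs_cases b with ⟨hb, _⟩ | ⟨hb, _⟩ <;>
    rw [ha, hb] <;> nlinarith

lemma abs_signedSq_sub_le (a b : ℝ) : |signedSq a - signedSq b| ≤ |a - b| * (|a| + |b|) := by
  have h : signedSq a - signedSq b = (a - b) * |a| + b * (|a| - |b|) := by
    rw [signedSq, signedSq]
    ring
  calc |signedSq a - signedSq b| = |(a - b) * |a| + b * (|a| - |b|)| := by rw [h]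
    _ ≤ |a - b| * |a| + |b| * |(|a| - |b|)| := by
      simpa [abs_mul] using abs_add_le ((a - b) * |a|) (b * (|a| - |b|))
    _ ≤ |a - b| * (|a| + |b|) := by
      linarith [mul_le_mul_of_nonneg_left (abs_abs_sub_abs_le a b) (abs_nonneg b)]

lemma sq_sub_le_two_mul_abs_signedSq_sub (a b : ℝ) :
    (a - b) ^ 2 ≤ 2 * |signedSq a - signedSq b| := by
  wlog hab : b ≤ a generalizing a b
  · rw [← neg_sq, neg_sub, abs_sub_comm]
    exact this b a (le_of_not_ge hab)
  rw [abs_of_nonneg (sub_nonneg.2 (signedSq_mono hab)), signedSq, signedSq]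
  rcases abs_cases a with ⟨ha, _⟩ | ⟨ha, _⟩ <;> rcases abs_cases b with ⟨hb, _⟩ | ⟨hb, _⟩ <;>
    rw [ha, hb] <;> nlinarith [sq_nonneg (a + b)]

lemma abs_signedSq_sub_cyclic_sum (a b c : ℝ) :
    |signedSq (a - c) - signedSq (b - c)| + |signedSq (b - a) - signedSq (c - a)| +
      |signedSq (c - b) - signedSq (a - b)|
    = (|a - c| * |b - c| + (a - b) ^ 2 / 2) + (|b - a| * |c - a| + (b - c) ^ 2 / 2) +
      (|c - b| * |a - b| + (c - a) ^ 2 / 2) := by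
  -- both sides are invariant under permutations of `a`, `b`, `c`
  wlog hab : b ≤ a generalizing a b c
  · have := this b a c (le_of_not_ge hab)
    grind
  wlog hac : c ≤ a generalizing a b c
  · have := this c a b (le_of_not_ge hac)
    grind
  wlog hbc : c ≤ b generalizing a b c
  · have := this a c b hac hab (le_of_not_ge hbc)
    grind
  have hmono {p q : ℝ} (hpq : p ≤ q) : |signedSq p - signedSq q| = signedSq q - signedSq p := by
    rw [abs_sub_comm, abs_of_nonneg (sub_nonneg.2 (signedSq_mono hpq))]
  rw [abs_sub_comm, hmono (by linarith), abs_sub_comm (signedSq (b - a)), hmono (by linarith),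
    hmono (by linarith)]
  simp only [signedSq]
  rw [abs_of_nonneg (sub_nonneg.2 hac), abs_of_nonneg (sub_nonneg.2 hbc),
    abs_of_nonneg (sub_nonneg.2 hab), abs_of_nonpos (sub_nonpos.2 hac),
    abs_of_nonpos (sub_nonpos.2 hbc), abs_of_nonpos (sub_nonpos.2 hab)]
  ring

end SignedSq

section Variation

open MeasureTheory

variable {V : Type*} [Fintype V]

/-- The `ℓ¹` analogue of `quadForm`: for a symmetric `w`, the total variation of `h` over the
edges, each edge being counted once. -/
noncomputable def variation (w : V → V → ℝ) (h : V → ℝ) : ℝ :=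
  (1 / 2) * ∑ u, ∑ v, w u v * |h u - h v|

variable [DecidableEq V]

lemma cap_add_cap_compl (w : V → V → ℝ) (S : Finset V) :
    cap w S + cap w Sᶜ = ∑ u, ∑ v, if u ∈ S ↔ v ∈ S then 0 else w u v := by
  have cap_eq (T : Finset V) : cap w T = ∑ u, ∑ v, if u ∈ T ∧ v ∉ T then w u v else 0 := by
    simp_rw [cap, ite_and, ← mem_compl, sum_ite_irrel, sum_const_zero, sum_ite_mem,
      univ_inter]
  simp_rw [cap_eq, ← sum_add_distrib, mem_compl, not_not]
  refine sum_congr rfl fun u _ => sum_congr rfl fun v _ => ?_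
  by_cases hu : u ∈ S <;> by_cases hv : v ∈ S <;> simp [hu, hv]

lemma cap_sublevel_add_cap_compl (w : V → V → ℝ) (h : V → ℝ) (t : ℝ) :
    cap w {v | h v < t} + cap w ({v | h v < t} : Finset V)ᶜ =
      ∑ u, ∑ v, w u v * (Set.uIoc (h u) (h v)).indicator 1 t := by
  rw [cap_add_cap_compl]
  refine sum_congr rfl fun u _ => sum_congr rfl fun v _ => ?_
  by_cases hu : h u < t <;> by_cases hv : h v < t <;>
    simp [Set.mem_uIoc, hu, hv, not_le.2, not_lt.1]

lemma integrable_indicator_uIoc (a b : ℝ) :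
    Integrable ((Set.uIoc a b).indicator (1 : ℝ → ℝ)) :=
  (integrable_indicator_iff measurableSet_uIoc).2 (integrableOn_const (by simp))

lemma integrable_cap_sublevel (w : V → V → ℝ) (h : V → ℝ) :
    Integrable fun t => cap w {v | h v < t} + cap w ({v | h v < t} : Finset V)ᶜ := by
  simp_rw [cap_sublevel_add_cap_compl]
  exact integrable_finsetSum _ fun u _ => integrable_finsetSum _ fun v _ =>
    (integrable_indicator_uIoc _ _).const_mul _

lemma variation_eq_integral_cap (w : V → V → ℝ) (h : V → ℝ) :
    variation w h =
      (1 / 2) * ∫ t, (cap w {v | h v < t} + cap w ({v | h v < t} : Finset V)ᶜ) := by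
  have hint (u v : V) := (integrable_indicator_uIoc (h u) (h v)).const_mul (w u v)
  simp_rw [variation, cap_sublevel_add_cap_compl]
  rw [integral_finsetSum _ fun u _ => integrable_finsetSum _ fun v _ => hint u v]
  simp_rw [integral_finsetSum _ fun v _ => hint _ v, integral_const_mul,
    integral_indicator_one measurableSet_uIoc, measureReal_def, Real.volume_uIoc,
    ENNReal.toReal_ofReal (abs_nonneg _), abs_sub_comm]

lemma mul_variation_le_variation {G H : V → V → ℝ} {c : ℝ}
    (hcap : ∀ S : Finset V, c * cap H S ≤ cap G S) (h : V → ℝ) :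
    c * variation H h ≤ variation G h := by
  rw [variation_eq_integral_cap, variation_eq_integral_cap, mul_left_comm, ← integral_const_mul c]
  refine mul_le_mul_of_nonneg_left (integral_mono ((integrable_cap_sublevel H h).const_mul c)
    (integrable_cap_sublevel G h) fun t => ?_) (by norm_num)
  simp only [mul_add]
  exact add_le_add (hcap _) (hcap _)

lemma variation_demand (G : V → V → ℝ) (h : V → ℝ) :
    variation (demand G) h =
      (∑ u, ∑ v, deg G u * deg G v * |h u - h v|) / (2 * vol G univ) := by
  have term (u v : V) :
      demand G u v * |h u - h v| = deg G u * deg G v * |h u - h v| / vol G univ := by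
    by_cases huv : u = v <;> simp [demand, huv, div_mul_eq_mul_div]
  simp_rw [variation, term, ← sum_div]
  ring

end Variation

section Energy

variable {V : Type*} [Fintype V]

lemma sum_mul_add_eq_two_mul_sum_deg_mul {w : V → V → ℝ} (hsymm : ∀ u v, w u v = w v u)
    (g : V → ℝ) : ∑ u, ∑ v, w u v * (g u + g v) = 2 * ∑ u, deg w u * g u := by
  have swap : ∑ u, ∑ v, w u v * g v = ∑ u, ∑ v, w u v * g u := by
    rw [sum_comm]
    simp_rw [fun u v => hsymm v u]
  simp_rw [mul_add, sum_add_distrib, swap, deg, sum_mul, two_mul]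

lemma mul_variation_le_quadForm_add {w : V → V → ℝ} (hsymm : ∀ u v, w u v = w v u)
    (hnonneg : ∀ u v, 0 ≤ w u v) {x g h : V → ℝ}
    (hh : ∀ u v, |h u - h v| ≤ |x u - x v| * (g u + g v)) {t : ℝ} (ht : 0 ≤ t) :
    t * variation w h ≤ quadForm w x + t ^ 2 / 2 * ∑ v, deg w v * g v ^ 2 := by
  -- AM-GM, then `(g u + g v) ^ 2 ≤ 2 * (g u ^ 2 + g v ^ 2)`
  have edge (u v : V) :
      t * |h u - h v| ≤ (x u - x v) ^ 2 + t ^ 2 / 2 * (g u ^ 2 + g v ^ 2) :=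
    calc t * |h u - h v| ≤ |x u - x v| * (t * (g u + g v)) := by
          linarith [mul_le_mul_of_nonneg_left (hh u v) ht]
      _ ≤ |x u - x v| ^ 2 + t ^ 2 / 4 * (g u + g v) ^ 2 := by
          linarith [sq_nonneg (|x u - x v| - t / 2 * (g u + g v))]
      _ ≤ (x u - x v) ^ 2 + t ^ 2 / 2 * (g u ^ 2 + g v ^ 2) := by
          rw [sq_abs]
          linarith [sq_nonneg (t * (g u - g v))]
  have total : ∑ u, ∑ v, w u v * (t * |h u - h v|) ≤
      ∑ u, ∑ v, w u v * ((x u - x v) ^ 2 + t ^ 2 / 2 * (g u ^ 2 + g v ^ 2)) := by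
    gcongr with u _ v _
    exacts [hnonneg u v, edge u v]
  have hsum := sum_mul_add_eq_two_mul_sum_deg_mul hsymm fun v => g v ^ 2
  simp_rw [mul_add (w _ _), mul_left_comm (w _ _), sum_add_distrib, ← mul_sum, hsum] at total
  rw [variation, quadForm]
  linarith

end Energy

section Potential

variable {V : Type*} [Fintype V]

/-- The potential of the vertex weights `μ` for the kernel `|x u - x w|`; for a probability
weight it is the mean distance from `x u`. -/
def absPotential (μ x : V → ℝ) (u : V) : ℝ := ∑ w, μ w * |x u - x w|

/-- The potential of the vertex weights `μ` for the kernel `signedSq (x u - x w)`. As a function of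
`x u` its derivative is `2 * absPotential μ x u`. With `μ` the degrees it is the test function
whose cut comparison with the demand graph yields the spectral bound. -/
def signedSqPotential (μ x : V → ℝ) (u : V) : ℝ := ∑ w, μ w * signedSq (x u - x w)

lemma abs_signedSqPotential_sub {μ : V → ℝ} (hμ : ∀ v, 0 ≤ μ v) (x : V → ℝ) (u v : V) :
    |signedSqPotential μ x u - signedSqPotential μ x v| =
      ∑ w, μ w * |signedSq (x u - x w) - signedSq (x v - x w)| := by
  wlog huv : x v ≤ x u generalizing u v
  · simpa only [abs_sub_comm] using this v u (le_of_not_ge huv)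
  have hmono (w : V) : 0 ≤ signedSq (x u - x w) - signedSq (x v - x w) :=
    sub_nonneg.2 (signedSq_mono (by gcongr))
  simp_rw [signedSqPotential, ← sum_sub_distrib, ← mul_sub, abs_of_nonneg (hmono _)]
  exact abs_of_nonneg (sum_nonneg fun w _ => mul_nonneg (hμ w) (hmono w))

lemma abs_signedSqPotential_sub_le {μ : V → ℝ} (hμ : ∀ v, 0 ≤ μ v) (x : V → ℝ) (u v : V) :
    |signedSqPotential μ x u - signedSqPotential μ x v| ≤
      |x u - x v| * (absPotential μ x u + absPotential μ x v) := by
  simp_rw [abs_signedSqPotential_sub hμ, absPotential, ← sum_add_distrib, mul_sum]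
  refine sum_le_sum fun w _ => ?_
  calc μ w * |signedSq (x u - x w) - signedSq (x v - x w)|
      ≤ μ w * (|x u - x w - (x v - x w)| * (|x u - x w| + |x v - x w|)) :=
        mul_le_mul_of_nonneg_left (abs_signedSq_sub_le _ _) (hμ w)
    _ = |x u - x v| * (μ w * |x u - x w| + μ w * |x v - x w|) := by
        rw [sub_sub_sub_cancel_right]; ring

lemma sum_eq_sum_of_cyclic_sum_eq {M : Type*} [AddCommMonoid M] [IsAddTorsionFree M]
    {g k : V → V → V → M}
    (h : ∀ u v w, g u v w + g v w u + g w u v = k u v w + k v w u + k w u v) :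
    ∑ u, ∑ v, ∑ w, g u v w = ∑ u, ∑ v, ∑ w, k u v w := by
  have sum_cyclic (f : V → V → V → M) :
      ∑ u, ∑ v, ∑ w, (f u v w + f v w u + f w u v) = 3 • ∑ u, ∑ v, ∑ w, f u v w := by
    have rotate : ∑ u, ∑ v, ∑ w, f v w u = ∑ u, ∑ v, ∑ w, f u v w := sum_comm_cycle.symm
    have rotate' : ∑ u, ∑ v, ∑ w, f w u v = ∑ u, ∑ v, ∑ w, f u v w := sum_comm_cycle
    simp_rw [sum_add_distrib, rotate, rotate', succ_nsmul, zero_nsmul, zero_add]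
  apply nsmul_right_injective three_ne_zero
  simp_rw [← sum_cyclic, h]

lemma sum_mul_sq_sub {R : Type*} [CommRing R] (μ x : V → R) :
    ∑ u, ∑ v, μ u * μ v * (x u - x v) ^ 2 =
      2 * ((∑ v, μ v) * ∑ v, μ v * x v ^ 2 - (∑ v, μ v * x v) ^ 2) := by
  have expand (u v : V) : μ u * μ v * (x u - x v) ^ 2 =
      μ u * x u ^ 2 * μ v + μ u * (μ v * x v ^ 2) - 2 * (μ u * x u) * (μ v * x v) := by ring
  simp_rw [expand, sum_sub_distrib, sum_add_distrib, ← mul_sum, ← sum_mul,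
    ← mul_sum]
  ring

lemma sum_mul_abs_sub_mul_abs_sub (μ x : V → ℝ) :
    ∑ u, ∑ v, ∑ w, μ u * μ v * μ w * (|x u - x w| * |x v - x w|) =
      ∑ w, μ w * absPotential μ x w ^ 2 := by
  rw [sum_comm_cycle]
  refine sum_congr rfl fun w _ => ?_
  simp_rw [absPotential, abs_sub_comm (x w), sq, sum_mul_sum, mul_sum]
  exact sum_congr rfl fun u _ => sum_congr rfl fun v _ => by ring

lemma sum_mul_abs_signedSqPotential_sub {μ : V → ℝ} (hμ : ∀ v, 0 ≤ μ v) (x : V → ℝ) :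
    ∑ u, ∑ v, μ u * μ v * |signedSqPotential μ x u - signedSqPotential μ x v| =
      ∑ v, μ v * absPotential μ x v ^ 2 +
        (∑ v, μ v) * ((∑ v, μ v) * ∑ v, μ v * x v ^ 2 - (∑ v, μ v * x v) ^ 2) := by
  calc _ = ∑ u, ∑ v, ∑ w, μ u * μ v * μ w *
        |signedSq (x u - x w) - signedSq (x v - x w)| := by
        simp_rw [abs_signedSqPotential_sub hμ, mul_sum, mul_assoc]
    _ = ∑ u, ∑ v, ∑ w, μ u * μ v * μ w *
        (|x u - x w| * |x v - x w| + (x u - x v) ^ 2 / 2) :=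
        sum_eq_sum_of_cyclic_sum_eq fun u v w => by
          linear_combination μ u * μ v * μ w *
            abs_signedSq_sub_cyclic_sum (x u) (x v) (x w)
    _ = ∑ w, μ w * absPotential μ x w ^ 2 +
        (∑ u, ∑ v, μ u * μ v * (x u - x v) ^ 2) / 2 * ∑ w, μ w := by
        simp_rw [mul_add, sum_add_distrib, sum_mul_abs_sub_mul_abs_sub, sum_div, sum_mul,
          mul_sum]
        congr! 4
        ring
    _ = _ := by rw [sum_mul_sq_sub]; ring

end Potential

section Cheeger

variable {V : Type*} [Fintype V]

lemma deg_nonneg {w : V → V → ℝ} (hnonneg : ∀ u v, 0 ≤ w u v) (v : V) : 0 ≤ deg w v :=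
  sum_nonneg fun u _ => hnonneg v u

lemma quadForm_le_two_mul_variation_signedSq {w : V → V → ℝ} (hnonneg : ∀ u v, 0 ≤ w u v)
    (x : V → ℝ) : quadForm w x ≤ 2 * variation w fun v => signedSq (x v) := by
  rw [quadForm, variation, mul_left_comm]
  simp_rw [mul_sum, mul_left_comm (2 : ℝ) (w _ _)]
  gcongr with u _ v _
  exacts [hnonneg u v, sq_sub_le_two_mul_abs_signedSq_sub (x u) (x v)]

variable [DecidableEq V]

theorem sq_mul_sum_deg_mul_sq_le_quadForm {G : V → V → ℝ} (hsymm : ∀ u v, G u v = G v u)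
    (hnonneg : ∀ u v, 0 ≤ G u v) (hvol : 0 < vol G univ) {α : ℝ} (hα : 0 ≤ α)
    (hcap : ∀ S : Finset V, α * cap (demand G) S ≤ cap G S)
    {x : V → ℝ} (hx : ∑ v, deg G v * x v = 0) :
    α ^ 2 * ∑ v, deg G v * x v ^ 2 ≤ 2 * quadForm G x := by
  set M := vol G univ with hM
  have hdeg := deg_nonneg hnonneg
  have hdemand : variation (demand G) (signedSqPotential (deg G) x) =
      (∑ v, deg G v * absPotential (deg G) x v ^ 2 + M ^ 2 * ∑ v, deg G v * x v ^ 2) /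
        (2 * M) := by
    rw [variation_demand, sum_mul_abs_signedSqPotential_sub hdeg, hx, ← vol, ← hM]
    ring
  have hlower := mul_variation_le_variation hcap (signedSqPotential (deg G) x)
  -- the factor `α / M` is the one for which the terms in `absPotential` cancel
  have hupper := mul_variation_le_quadForm_add hsymm hnonneg
    (abs_signedSqPotential_sub_le hdeg x) (div_nonneg hα hvol.le)
  have hsplit : α / M * (α * variation (demand G) (signedSqPotential (deg G) x)) =
      (α / M) ^ 2 / 2 * ∑ v, deg G v * absPotential (deg G) x v ^ 2 +
        α ^ 2 / 2 * ∑ v, deg G v * x v ^ 2 := by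
    rw [hdemand]
    field_simp
  linarith [mul_le_mul_of_nonneg_left hlower (div_nonneg hα hvol.le)]

theorem generalized_cheeger_demand_general {G H : V → V → ℝ}
    (hGsymm : ∀ u v, G u v = G v u) (hGnn : ∀ u v, 0 ≤ G u v) (hHnn : ∀ u v, 0 ≤ H u v)
    (hvol : 0 < vol G univ) {α β : ℝ} (hα : 0 ≤ α) (hβ : 0 ≤ β)
    (hcapD : ∀ S : Finset V, α * cap (demand G) S ≤ cap G S)
    (hcapH : ∀ S : Finset V, β * cap H S ≤ cap G S)
    {x : V → ℝ} (hx : ∑ v, deg G v * x v = 0) :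
    α * β * quadForm H x ≤ 4 * quadForm G x := by
  have hspectral := sq_mul_sum_deg_mul_sq_le_quadForm hGsymm hGnn hvol hα hcapD hx
  have hupper : α * variation G (fun v => signedSq (x v)) ≤
      quadForm G x + α ^ 2 / 2 * ∑ v, deg G v * x v ^ 2 := by
    simpa only [sq_abs] using mul_variation_le_quadForm_add hGsymm hGnn
      (fun u v => abs_signedSq_sub_le (x u) (x v)) hα
  calc α * β * quadForm H x
      ≤ α * β * (2 * variation H fun v => signedSq (x v)) := by
        gcongr
        exact quadForm_le_two_mul_variation_signedSq hHnn x
    _ = 2 * (α * (β * variation H fun v => signedSq (x v))) := by ring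
    _ ≤ 2 * (α * variation G fun v => signedSq (x v)) := by
        gcongr
        exact mul_variation_le_variation hcapH _
    _ ≤ 4 * quadForm G x := by linarith

end Cheeger

/-- **Generalized Cheeger inequality** (main theorem, `φ(G,D_G)` form):
`xᵀL_G x / xᵀL_H x ≥ φ(G,D_G)·φ(G,H)/4` for every `x` with `xᵀd = 0`. -/
theorem generalized_cheeger_demand {V : Type*} [Fintype V] [DecidableEq V] [Nonempty V]
    (G H : V → V → ℝ)
    (hGsymm : ∀ u v, G u v = G v u) (hGnn : ∀ u v, 0 ≤ G u v) (hGdiag : ∀ v, G v v = 0)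
    (hHsymm : ∀ u v, H u v = H v u) (hHnn : ∀ u v, 0 ≤ H u v) (hHdiag : ∀ v, H v v = 0)
    (hvol : 0 < vol G Finset.univ)
    (α β : ℝ) (hα : 0 ≤ α) (hβ : 0 ≤ β)
    (hcapD : ∀ S : Finset V, α * cap (demand G) S ≤ cap G S)
    (hcapH : ∀ S : Finset V, β * cap H S ≤ cap G S)
    (x : V → ℝ) (hx : ∑ v, deg G v * x v = 0) :
    α * β * quadForm H x ≤ 4 * quadForm G x :=
  generalized_cheeger_demand_general hGsymm hGnn hHnn hvol hα hβ hcapD hcapH hx
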